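/- Pinney's superposition theorem: let ω, u, v : ℝ → ℝ with u and v twice differentiable, u''(t) + ω(t)² u(t) = 0 and v''(t) + ω(t)² v(t) = 0 for all t, and suppose the Wronskian u(t)·v'(t) − u'(t)·v(t) equals a constant W ≠ 0 for all t. Let A, B, C ∈ ℝ with A > 0 and A·C − B² = 1/W². Then for every t one has A·u(t)² + 2B·u(t)·v(t) + C·v(t)² > 0, and the function x(t) = sqrt(A·u(t)² + 2B·u(t)·v(t) + C·v(t)²) is twice differentiable and satisfies x''(t) + ω(t)² x(t) = 1/x(t)³ for all t. -/

import Mathlib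

/-!
Write `Q(y) = A y₁² + 2B y₁y₂ + C y₂²`, with polar form `P`, and put `y = (u, v)`. The function
`√(Q(y))` solves the Ermakov–Pinney equation `x'' + q x = κ / x³` as soon as `Q(y)` is positive and
`2 Q(y) Q(y)'' - (Q(y)')² + 4 q Q(y)² = 4κ`. Along solutions of `y'' + q y = 0` one has
`Q(y)' = 2 P(y, y')` and `Q(y)'' = 2 (Q(y') - q Q(y))`, so the left-hand side is
`4 (Q(y) Q(y') - P(y, y')²)`. By the Gram determinant identity this is `4 (AC - B²) W²`, which is
constant because the Wronskian `W` is.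
-/

section BinaryForm

variable {R : Type*} [CommRing R]

/-- The binary quadratic form with coefficients `A`, `2B`, `C`; with this normalization its Gram
determinant is `AC - B²`. -/
def binaryForm (A B C x y : R) : R :=
  A * x ^ 2 + 2 * B * x * y + C * y ^ 2

/-- The symmetric bilinear form that restricts to `binaryForm A B C` on the diagonal, evaluated at
the vectors `(x₁, y₁)` and `(x₂, y₂)`. -/
def binaryPolar (A B C x₁ y₁ x₂ y₂ : R) : R :=
  A * x₁ * x₂ + B * (x₁ * y₂ + y₁ * x₂) + C * y₁ * y₂

theorem binaryForm_mul_binaryForm_sub_binaryPolar_sq (A B C x₁ y₁ x₂ y₂ : R) :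
    binaryForm A B C x₁ y₁ * binaryForm A B C x₂ y₂ - binaryPolar A B C x₁ y₁ x₂ y₂ ^ 2 =
      (A * C - B ^ 2) * (x₁ * y₂ - x₂ * y₁) ^ 2 := by
  simp only [binaryForm, binaryPolar]
  ring

theorem mul_binaryForm (A B C x y : R) :
    A * binaryForm A B C x y = (A * x + B * y) ^ 2 + (A * C - B ^ 2) * y ^ 2 := by
  simp only [binaryForm]
  ring

theorem binaryForm_pos [LinearOrder R] [IsStrictOrderedRing R] {A B C x y : R} (hA : 0 < A)
    (hdet : 0 < A * C - B ^ 2) (hxy : x ≠ 0 ∨ y ≠ 0) : 0 < binaryForm A B C x y := by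
  refine pos_of_mul_pos_right (a := A) ?_ hA.le
  rw [mul_binaryForm]
  obtain rfl | hy := eq_or_ne y 0
  · have hx : x ≠ 0 := by simpa using hxy
    have := hA.ne'
    simp only [mul_zero, add_zero, ne_eq, OfNat.ofNat_ne_zero, not_false_eq_true, zero_pow]
    positivity
  · positivity

end BinaryForm

section Derivatives

variable {𝕜 : Type*} [NontriviallyNormedField 𝕜] {f g h k : 𝕜 → 𝕜} {f' g' h' k' t : 𝕜}

theorem hasDerivAt_binaryForm (A B C : 𝕜) (hf : HasDerivAt f f' t) (hg : HasDerivAt g g' t) :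
    HasDerivAt (fun s => binaryForm A B C (f s) (g s))
      (2 * binaryPolar A B C (f t) (g t) f' g') t := by
  refine ((((hf.fun_pow 2).const_mul A).fun_add ((hf.const_mul (2 * B)).fun_mul hg)).fun_add
    ((hg.fun_pow 2).const_mul C)).congr_deriv ?_
  simp only [binaryPolar]
  push_cast
  ring

theorem hasDerivAt_binaryPolar (A B C : 𝕜) (hf : HasDerivAt f f' t) (hg : HasDerivAt g g' t)
    (hh : HasDerivAt h h' t) (hk : HasDerivAt k k' t) :
    HasDerivAt (fun s => binaryPolar A B C (f s) (g s) (h s) (k s))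
      (binaryPolar A B C f' g' (h t) (k t) + binaryPolar A B C (f t) (g t) h' k') t := by
  refine ((((hf.const_mul A).fun_mul hh).fun_add
    (((hf.fun_mul hk).fun_add (hg.fun_mul hh)).const_mul B)).fun_add
      ((hg.const_mul C).fun_mul hk)).congr_deriv ?_
  simp only [binaryPolar]
  ring

end Derivatives

theorem hasDerivAt_div_two_mul_sqrt {Q Q' : ℝ → ℝ} {Q'' t : ℝ} (hQ : HasDerivAt Q (Q' t) t)
    (hQ' : HasDerivAt Q' Q'' t) (hpos : 0 < Q t) :
    HasDerivAt (fun s => Q' s / (2 * √(Q s)))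
      ((2 * Q t * Q'' - Q' t ^ 2) / (4 * √(Q t) ^ 3)) t := by
  have hsqrt : √(Q t) ≠ 0 := (Real.sqrt_pos.2 hpos).ne'
  have hsq : √(Q t) ^ 2 = Q t := Real.sq_sqrt hpos.le
  refine (hQ'.fun_div ((hQ.sqrt hpos.ne').const_mul 2) (by positivity)).congr_deriv ?_
  field_simp
  rw [hsq]
  ring

/-- `u` is a twice differentiable solution of the linear oscillator equation `u'' + q u = 0`. The
potential `q` plays the role of `ω²` and may take either sign. -/
structure IsOscillatorSolution (q u : ℝ → ℝ) : Prop where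
  differentiable : Differentiable ℝ u
  differentiable_deriv : Differentiable ℝ (deriv u)
  deriv_deriv_add : ∀ t, deriv (deriv u) t + q t * u t = 0

/-- `x` is a positive, twice differentiable solution of the Ermakov–Pinney equation
`x'' + q x = κ / x³`. Positivity is part of the notion because `κ / 0 ^ 3 = 0` in Lean. -/
structure IsErmakovPinneySolution (q : ℝ → ℝ) (κ : ℝ) (x : ℝ → ℝ) : Prop where
  pos : ∀ t, 0 < x t
  differentiable : Differentiable ℝ x
  differentiable_deriv : Differentiable ℝ (deriv x)
  deriv_deriv_add : ∀ t, deriv (deriv x) t + q t * x t = κ / x t ^ 3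

/-- The Wronskian `u v' - u' v` of two real functions. -/
noncomputable def wronskian (u v : ℝ → ℝ) (t : ℝ) : ℝ :=
  u t * deriv v t - deriv u t * v t

theorem ne_zero_or_ne_zero_of_wronskian_ne_zero {u v : ℝ → ℝ} {t : ℝ} (h : wronskian u v t ≠ 0) :
    u t ≠ 0 ∨ v t ≠ 0 := by
  contrapose! h
  simp [wronskian, h]

namespace IsOscillatorSolution

variable {q u v : ℝ → ℝ}

theorem hasDerivAt (hu : IsOscillatorSolution q u) (t : ℝ) : HasDerivAt u (deriv u t) t :=
  (hu.differentiable t).hasDerivAt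

theorem hasDerivAt_deriv (hu : IsOscillatorSolution q u) (t : ℝ) :
    HasDerivAt (deriv u) (-(q t * u t)) t :=
  (hu.differentiable_deriv t).hasDerivAt.congr_deriv (eq_neg_of_add_eq_zero_left
    (hu.deriv_deriv_add t))

theorem wronskian_eq (hu : IsOscillatorSolution q u) (hv : IsOscillatorSolution q v) (s t : ℝ) :
    wronskian u v s = wronskian u v t := by
  have hderiv (r : ℝ) : HasDerivAt (wronskian u v) 0 r :=
    (((hu.hasDerivAt r).fun_mul (hv.hasDerivAt_deriv r)).fun_sub
      ((hu.hasDerivAt_deriv r).fun_mul (hv.hasDerivAt r))).congr_deriv (by ring)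
  exact is_const_of_deriv_eq_zero (fun r => (hderiv r).differentiableAt)
    (fun r => (hderiv r).deriv) s t

theorem hasDerivAt_two_mul_binaryPolar (hu : IsOscillatorSolution q u)
    (hv : IsOscillatorSolution q v) (A B C t : ℝ) :
    HasDerivAt (fun s => 2 * binaryPolar A B C (u s) (v s) (deriv u s) (deriv v s))
      (2 * (binaryForm A B C (deriv u t) (deriv v t) - q t * binaryForm A B C (u t) (v t))) t := by
  refine ((hasDerivAt_binaryPolar A B C (hu.hasDerivAt t) (hv.hasDerivAt t)
    (hu.hasDerivAt_deriv t) (hv.hasDerivAt_deriv t)).const_mul 2).congr_deriv ?_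
  simp only [binaryForm, binaryPolar]
  ring

end IsOscillatorSolution

theorem isErmakovPinneySolution_sqrt {q Q Q' Q'' : ℝ → ℝ} {κ : ℝ}
    (hQ : ∀ t, HasDerivAt Q (Q' t) t) (hQ' : ∀ t, HasDerivAt Q' (Q'' t) t) (hpos : ∀ t, 0 < Q t)
    (h : ∀ t, 2 * Q t * Q'' t - Q' t ^ 2 + 4 * q t * Q t ^ 2 = 4 * κ) :
    IsErmakovPinneySolution q κ (fun t => √(Q t)) := by
  have hfirst (t : ℝ) : HasDerivAt (fun s => √(Q s)) (Q' t / (2 * √(Q t))) t :=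
    (hQ t).sqrt (hpos t).ne'
  have hderiv : deriv (fun t => √(Q t)) = fun t => Q' t / (2 * √(Q t)) :=
    funext fun t => (hfirst t).deriv
  have hsecond (t : ℝ) := hasDerivAt_div_two_mul_sqrt (hQ t) (hQ' t) (hpos t)
  refine ⟨fun t => Real.sqrt_pos.2 (hpos t), fun t => (hfirst t).differentiableAt,
    hderiv ▸ fun t => (hsecond t).differentiableAt, fun t => ?_⟩
  have hsqrt : √(Q t) ≠ 0 := (Real.sqrt_pos.2 (hpos t)).ne'
  have hpow : √(Q t) ^ 4 = Q t ^ 2 := by rw [pow_mul _ 2 2, Real.sq_sqrt (hpos t).le]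
  rw [hderiv, (hsecond t).deriv]
  field_simp
  rw [hpow]
  linear_combination h t

theorem pinney_superposition_general {q u v : ℝ → ℝ} {A B C κ t₀ : ℝ}
    (hu : IsOscillatorSolution q u) (hv : IsOscillatorSolution q v) (hA : 0 < A) (hκ : 0 < κ)
    (hABC : (A * C - B ^ 2) * wronskian u v t₀ ^ 2 = κ) :
    IsErmakovPinneySolution q κ (fun t => √(binaryForm A B C (u t) (v t))) := by
  have hdet : 0 < A * C - B ^ 2 := pos_of_mul_pos_left (hABC ▸ hκ) (sq_nonneg _)
  have hW : wronskian u v t₀ ≠ 0 := by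
    intro hW
    simp [← hABC, hW] at hκ
  have hpos (t : ℝ) : 0 < binaryForm A B C (u t) (v t) :=
    binaryForm_pos hA hdet
      (ne_zero_or_ne_zero_of_wronskian_ne_zero (hu.wronskian_eq hv t t₀ ▸ hW))
  refine isErmakovPinneySolution_sqrt
    (fun t => hasDerivAt_binaryForm A B C (hu.hasDerivAt t) (hv.hasDerivAt t))
    (hu.hasDerivAt_two_mul_binaryPolar hv A B C) hpos fun t => ?_
  have hgram := binaryForm_mul_binaryForm_sub_binaryPolar_sq A B C (u t) (v t) (deriv u t)
    (deriv v t)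
  rw [← wronskian, hu.wronskian_eq hv t t₀, hABC] at hgram
  linear_combination 4 * hgram

/-- Pinney's superposition theorem: if `u, v` solve the linear oscillator equation with
constant nonzero Wronskian `W`, and `A > 0`, `A·C − B² = 1/W²`, then
`x = sqrt(A·u² + 2B·u·v + C·v²)` is positive under the square root, twice differentiable,
and solves the Ermakov–Pinney equation. -/
theorem pinney_superposition
    (ω u v : ℝ → ℝ)
    (hu : Differentiable ℝ u) (hu' : Differentiable ℝ (deriv u))
    (hv : Differentiable ℝ v) (hv' : Differentiable ℝ (deriv v))
    (hueq : ∀ t, deriv (deriv u) t + (ω t) ^ 2 * u t = 0)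
    (hveq : ∀ t, deriv (deriv v) t + (ω t) ^ 2 * v t = 0)
    (W : ℝ) (hW : W ≠ 0)
    (hWr : ∀ t, u t * deriv v t - deriv u t * v t = W)
    (A B C : ℝ) (hA : 0 < A) (hABC : A * C - B ^ 2 = 1 / W ^ 2) :
    (∀ t, 0 < A * (u t) ^ 2 + 2 * B * u t * v t + C * (v t) ^ 2) ∧
      (Differentiable ℝ
          (fun t => Real.sqrt (A * (u t) ^ 2 + 2 * B * u t * v t + C * (v t) ^ 2)) ∧
        Differentiable ℝ
          (deriv (fun t => Real.sqrt (A * (u t) ^ 2 + 2 * B * u t * v t + C * (v t) ^ 2)))) ∧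
      ∀ t,
        deriv (deriv (fun t => Real.sqrt (A * (u t) ^ 2 + 2 * B * u t * v t + C * (v t) ^ 2))) t
            + (ω t) ^ 2 * Real.sqrt (A * (u t) ^ 2 + 2 * B * u t * v t + C * (v t) ^ 2)
          = 1 / (Real.sqrt (A * (u t) ^ 2 + 2 * B * u t * v t + C * (v t) ^ 2)) ^ 3 := by
  have hx := pinney_superposition_general (t₀ := 0) ⟨hu, hu', hueq⟩ ⟨hv, hv', hveq⟩ hA one_pos
    (by rw [wronskian, hWr, hABC, one_div_mul_cancel (pow_ne_zero 2 hW)])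
  exact ⟨fun t => Real.sqrt_pos.1 (hx.pos t), ⟨hx.differentiable, hx.differentiable_deriv⟩,
    hx.deriv_deriv_add⟩
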